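/- Let d ≥ 1, let α = (α_1,…,α_d) be a multi-index with α_j > −1/2 for each j, and let n be a positive integer. There exists a constant C > 0, depending only on α, d and n, such that for every bounded measurable function f on (0,∞)^d and every t > 0, sup_{x ∈ (0,∞)^d} |∂^n_t P_t^α f(x)| ≤ C ∥f∥_∞ t^{−n}, where ∂^n_t denotes the n-th derivative in the variable t. -/

import Mathlib

open MeasureTheory Real Set

noncomputable def besselI (ν z : ℝ) : ℝ :=
  ∑' m : ℕ, (z / 2) ^ (2 * (m : ℝ) + ν) / (Nat.factorial m * Real.Gamma ((m : ℝ) + ν + 1))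

/-- The positive orthant `(0,∞)^d`. -/
def posOrthant (d : ℕ) : Set (Fin d → ℝ) := Set.univ.pi fun _ => Set.Ioi 0

/-- The Poisson–Laguerre kernel `p_t^α(x,y)`. -/
noncomputable def plKernel (d : ℕ) (α : Fin d → ℝ) (t : ℝ) (x y : Fin d → ℝ) : ℝ :=
  (1 / (2 * Real.sqrt π)) *
    ∫ r in Set.Ioo (0 : ℝ) 1,
      (t * Real.exp (t ^ 2 / (4 * Real.log r)) /
          ((1 - r) ^ d * (-Real.log r) ^ ((3 : ℝ) / 2))) *
        (∏ j, (y j / x j) ^ (α j / 2) *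
            Real.exp (-((r * x j + y j) / (1 - r)) - α j * Real.log r / 2) *
            besselI (α j) (2 * Real.sqrt (r * x j * y j) / (1 - r))) / r

/-- The Poisson–Laguerre semigroup `P_t^α f`, with the convention `P_0^α f = f`. -/
noncomputable def plP (d : ℕ) (α : Fin d → ℝ) (t : ℝ)
    (f : (Fin d → ℝ) → ℝ) (x : Fin d → ℝ) : ℝ :=
  if t = 0 then f x else ∫ y in posOrthant d, plKernel d α t x y * f y

/-! Substituting `v = -1 / log r`, i.e. `v = 1 / s` for the heat time `s`, turns the subordination
formula into `P_t f = t / (2√π) ∫₀^∞ e^{-t² v / 4} v^{-1/2} W_{1/v} f dv`, a Laplace transform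
evaluated at `t² / 4`. It therefore extends holomorphically in `t` to the sector `0 < Re t²`. The
heat kernel of `W` is a Poisson mixture of gamma densities, hence a probability density, so
`|W f| ≤ ‖f‖∞` and `|P_z f| ≤ ‖f‖∞ |z| / √(Re z²)`. This is at most `√2 ‖f‖∞` on the disc of centre
`t` and radius `t / 2`, and Cauchy's estimate on that disc gives the factor `t⁻ⁿ`. -/

section Cauchy

lemma iteratedDeriv_re_comp_ofReal {F : ℂ → ℂ} {t : ℝ} (hF : AnalyticAt ℂ F t) (n : ℕ) :
    iteratedDeriv n (fun u : ℝ => (F u).re) t = (iteratedDeriv n F t).re := by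
  induction n generalizing t with
  | zero => simp only [iteratedDeriv_zero]
  | succ n ih =>
    have hFn : AnalyticAt ℂ (iteratedDeriv n F) t := by
      rw [iteratedDeriv_eq_iterate]
      exact hF.iterated_deriv n
    have heq : iteratedDeriv n (fun u : ℝ => (F u).re) =ᶠ[nhds t]
        fun u : ℝ => (iteratedDeriv n F u).re :=
      (Complex.continuous_ofReal.continuousAt.eventually hF.eventually_analyticAt).mono
        fun _ hu => ih hu
    rw [iteratedDeriv_succ, iteratedDeriv_succ, heq.deriv_eq]
    exact hFn.differentiableAt.hasDerivAt.real_of_complex.deriv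

lemma abs_iteratedDeriv_re_le_of_forall_mem_sphere_norm_le {F : ℂ → ℂ} {t R C : ℝ} (n : ℕ)
    (hR : 0 < R) (hF : DiffContOnCl ℂ F (Metric.ball t R))
    (hC : ∀ z ∈ Metric.sphere (t : ℂ) R, ‖F z‖ ≤ C) :
    |iteratedDeriv n (fun u : ℝ => (F u).re) t| ≤ n.factorial * C / R ^ n := by
  rw [iteratedDeriv_re_comp_ofReal
    (hF.differentiableOn.analyticAt (Metric.ball_mem_nhds _ hR)) n]
  exact (Complex.abs_re_le_norm _).trans
    (Complex.norm_iteratedDeriv_le_of_forall_mem_sphere_norm_le n hR hF hC)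

end Cauchy

section Laplace

variable {E : Type*} [NormedAddCommGroup E] [NormedSpace ℂ E]

/-- The Laplace transform of `φ` on the half-line, at a complex frequency `z`; it is meaningful
where `v ↦ e^{-zv} φ(v)` is integrable on `(0,∞)`. -/
noncomputable def laplaceTransform (φ : ℝ → E) (z : ℂ) : E :=
  ∫ v in Ioi (0 : ℝ), Complex.exp (-(z * v)) • φ v

lemma norm_cexp_neg_mul_ofReal_smul (z : ℂ) (v : ℝ) (w : E) :
    ‖Complex.exp (-(z * v)) • w‖ = exp (-(z.re * v)) * ‖w‖ := by
  rw [norm_smul, Complex.norm_exp, Complex.neg_re, Complex.re_mul_ofReal]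

lemma laplaceTransform_ofReal (φ : ℝ → ℝ) (c : ℝ) :
    laplaceTransform (fun v => (φ v : ℂ)) c =
      ((∫ v in Ioi (0 : ℝ), exp (-(c * v)) * φ v : ℝ) : ℂ) := by
  rw [laplaceTransform, ← integral_complex_ofReal]
  simp only [smul_eq_mul, Complex.ofReal_mul, Complex.ofReal_exp, Complex.ofReal_neg]

lemma mul_exp_neg_mul_le {b c v : ℝ} (hb : 0 < b) (hv : 0 ≤ v) (hc : 2 * b ≤ c) :
    v * exp (-(c * v)) ≤ b⁻¹ * exp (-(b * v)) :=
  calc v * exp (-(c * v)) ≤ v * exp (-(2 * b * v)) := by gcongr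
    _ = b⁻¹ * (b * v) * exp (-(2 * b * v)) := by field_simp
    _ ≤ b⁻¹ * exp (b * v) * exp (-(2 * b * v)) := by
        gcongr
        linarith [add_one_le_exp (b * v)]
    _ = b⁻¹ * exp (-(b * v)) := by
        rw [mul_assoc, ← exp_add]
        ring_nf

lemma aestronglyMeasurable_cexp_neg_mul_smul {φ : ℝ → E} {μ : Measure ℝ}
    (hφ : AEStronglyMeasurable φ μ) (z : ℂ) :
    AEStronglyMeasurable (fun v : ℝ => Complex.exp (-(z * v)) • φ v) μ :=
  Continuous.aestronglyMeasurable (by fun_prop) |>.smul hφ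

theorem differentiableAt_laplaceTransform {φ : ℝ → E}
    (hφ : AEStronglyMeasurable φ (volume.restrict (Ioi 0)))
    (hint : ∀ c > 0, IntegrableOn (fun v => exp (-(c * v)) * ‖φ v‖) (Ioi 0))
    {z : ℂ} (hz : 0 < z.re) :
    DifferentiableAt ℂ (laplaceTransform φ) z := by
  have hmeas := aestronglyMeasurable_cexp_neg_mul_smul hφ
  have hderiv (v : ℝ) (w : ℂ) : HasDerivAt (fun w : ℂ => Complex.exp (-(w * v)) • φ v)
      (-(v : ℂ) • Complex.exp (-(w * v)) • φ v) w := by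
    have hexp : HasDerivAt (fun w : ℂ => -(w * v)) (-(v : ℂ)) w := by
      simpa only [one_mul] using! ((hasDerivAt_id w).mul_const (v : ℂ)).neg
    simpa only [smul_smul, mul_comm (-(v : ℂ))] using! hexp.cexp.smul_const (φ v)
  have hbound {v : ℝ} (hv : v ∈ Ioi 0) {w : ℂ} (hw : z.re / 2 < w.re) :
      ‖-(v : ℂ) • Complex.exp (-(w * v)) • φ v‖ ≤
        (z.re / 4)⁻¹ * (exp (-(z.re / 4 * v)) * ‖φ v‖) := by
    have hv0 : 0 ≤ v := le_of_lt hv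
    rw [norm_smul, norm_neg, Complex.norm_of_nonneg hv0, norm_cexp_neg_mul_ofReal_smul,
      ← mul_assoc, ← mul_assoc]
    gcongr ?_ * _
    exact mul_exp_neg_mul_le (by positivity) hv0 (by linarith)
  refine (hasDerivAt_integral_of_dominated_loc_of_deriv_le
    (s := {w | z.re / 2 < w.re}) (F' := fun w v => -(v : ℂ) • Complex.exp (-(w * v)) • φ v)
    ((isOpen_lt continuous_const Complex.continuous_re).mem_nhds (half_lt_self hz))
    (.of_forall hmeas) ?_ ?_
    (ae_restrict_of_forall_mem measurableSet_Ioi fun v hv w hw => hbound hv hw)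
    ((hint (z.re / 4) (by positivity)).const_mul _)
    (.of_forall fun v w _ => hderiv v w)).2.differentiableAt
  · exact (hint z.re hz).mono' (hmeas z)
      (.of_forall fun v => (norm_cexp_neg_mul_ofReal_smul z v (φ v)).le)
  · exact Continuous.aestronglyMeasurable (by fun_prop) |>.smul (hmeas z)

lemma integrableOn_exp_neg_mul_rpow {a c : ℝ} (ha : 0 < a) (hc : 0 < c) :
    IntegrableOn (fun v => exp (-(c * v)) * v ^ (a - 1)) (Ioi 0) := by
  simpa only [rpow_one, neg_mul, mul_comm (exp _)] using
    integrableOn_rpow_mul_exp_neg_mul_rpow (by linarith : -1 < a - 1) one_pos hc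

lemma exp_neg_mul_norm_rpow_smul_le {a c v M : ℝ} {w : E} (hv : v ∈ Ioi 0) (hw : ‖w‖ ≤ M) :
    exp (-(c * v)) * ‖v ^ (a - 1) • w‖ ≤ M * (exp (-(c * v)) * v ^ (a - 1)) := by
  have hva : 0 ≤ v ^ (a - 1) := rpow_nonneg (le_of_lt hv) _
  rw [norm_smul, norm_of_nonneg hva, ← mul_assoc, mul_comm M]
  gcongr

lemma norm_laplaceTransform_rpow_smul_le {a M : ℝ} (ha : 0 < a) {g : ℝ → E}
    (hM : ∀ v ∈ Ioi (0 : ℝ), ‖g v‖ ≤ M) {z : ℂ} (hz : 0 < z.re) :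
    ‖laplaceTransform (fun v => v ^ (a - 1) • g v) z‖ ≤ M * ((1 / z.re) ^ a * Gamma a) := by
  rw [← integral_rpow_mul_exp_neg_mul_Ioi ha hz, ← integral_const_mul]
  simp only [mul_comm (_ ^ (a - 1))]
  refine norm_integral_le_of_norm_le ((integrableOn_exp_neg_mul_rpow ha hz).const_mul M)
    (ae_restrict_of_forall_mem measurableSet_Ioi fun v hv => ?_)
  rw [norm_cexp_neg_mul_ofReal_smul]
  exact exp_neg_mul_norm_rpow_smul_le hv (hM v hv)

lemma differentiableAt_laplaceTransform_rpow_smul {a M : ℝ} (ha : 0 < a) {g : ℝ → E}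
    (hg : AEStronglyMeasurable g (volume.restrict (Ioi 0)))
    (hM : ∀ v ∈ Ioi (0 : ℝ), ‖g v‖ ≤ M) {z : ℂ} (hz : 0 < z.re) :
    DifferentiableAt ℂ (laplaceTransform fun v => v ^ (a - 1) • g v) z := by
  have hφ : AEStronglyMeasurable (fun v : ℝ => v ^ (a - 1) • g v) (volume.restrict (Ioi 0)) :=
    (measurable_id.pow_const (a - 1)).aestronglyMeasurable.smul hg
  refine differentiableAt_laplaceTransform hφ (fun c hc => ?_) hz
  refine ((integrableOn_exp_neg_mul_rpow ha hc).const_mul M).mono'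
    (Continuous.aestronglyMeasurable (by fun_prop) |>.mul hφ.norm)
    (ae_restrict_of_forall_mem measurableSet_Ioi fun v hv => ?_)
  rw [norm_of_nonneg (by positivity)]
  exact exp_neg_mul_norm_rpow_smul_le hv (hM v hv)

end Laplace

section Subordination

variable {E : Type*} [NormedAddCommGroup E] [NormedSpace ℂ E] {g : ℝ → E} {M : ℝ}

/-- The `1/2`-stable subordination of `g` at the complex time `z`, where `g v` stands for the value
of the subordinated semigroup at time `1 / v`. The power `v^{-1/2}` is written `v^{1/2 - 1}`, as in
Euler's integral. -/
noncomputable def poissonSubordination (g : ℝ → E) (z : ℂ) : E :=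
  (z / (2 * √π : ℝ)) • laplaceTransform (fun v => v ^ ((1 / 2 : ℝ) - 1) • g v) (z ^ 2 / 4)

lemma poissonSubordination_ofReal (g : ℝ → ℝ) (t : ℝ) :
    poissonSubordination (fun v => (g v : ℂ)) t =
      ((t / (2 * √π) * ∫ v in Ioi (0 : ℝ),
        exp (-(t ^ 2 / 4 * v)) * (v ^ ((1 / 2 : ℝ) - 1) * g v) : ℝ) : ℂ) := by
  have hsq : (t : ℂ) ^ 2 / 4 = ((t ^ 2 / 4 : ℝ) : ℂ) := by push_cast; rfl
  simp only [poissonSubordination, hsq, Complex.real_smul, ← Complex.ofReal_mul,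
    laplaceTransform_ofReal, smul_eq_mul, ← Complex.ofReal_div]

lemma norm_poissonSubordination_le (hM : ∀ v ∈ Ioi (0 : ℝ), ‖g v‖ ≤ M) {z : ℂ}
    (hz : 0 < (z ^ 2).re) :
    ‖poissonSubordination g z‖ ≤ M * (‖z‖ / √(z ^ 2).re) := by
  have hz4 : 0 < (z ^ 2 / 4).re := by rw [Complex.div_ofNat_re]; positivity
  have hL := norm_laplaceTransform_rpow_smul_le one_half_pos hM hz4
  have hval : (1 / (z ^ 2 / 4).re) ^ (1 / 2 : ℝ) * Gamma (1 / 2) = 2 * √π / √(z ^ 2).re := by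
    rw [Gamma_one_half_eq, ← sqrt_eq_rpow, Complex.div_ofNat_re, one_div_div,
      sqrt_div (by norm_num), show (4 : ℝ) = 2 ^ 2 by norm_num, sqrt_sq zero_le_two]
    ring
  rw [hval] at hL
  rw [poissonSubordination, norm_smul, norm_div, Complex.norm_of_nonneg (by positivity)]
  calc ‖z‖ / (2 * √π) * _ ≤ ‖z‖ / (2 * √π) * (M * (2 * √π / √(z ^ 2).re)) := by gcongr
    _ = M * (‖z‖ / √(z ^ 2).re) := by field_simp

lemma differentiableAt_poissonSubordination
    (hg : AEStronglyMeasurable g (volume.restrict (Ioi 0)))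
    (hM : ∀ v ∈ Ioi (0 : ℝ), ‖g v‖ ≤ M) {z : ℂ} (hz : 0 < (z ^ 2).re) :
    DifferentiableAt ℂ (poissonSubordination g) z := by
  have hL : DifferentiableAt ℂ (laplaceTransform fun v => v ^ ((1 / 2 : ℝ) - 1) • g v)
      (z ^ 2 / 4) :=
    differentiableAt_laplaceTransform_rpow_smul one_half_pos hg hM
      (by rw [Complex.div_ofNat_re]; positivity)
  exact .smul (by fun_prop) (hL.comp z (f := fun z : ℂ => z ^ 2 / 4) (by fun_prop))

lemma norm_sq_le_two_mul_re_sq_of_mem_closedBall {t : ℝ} {z : ℂ}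
    (hz : z ∈ Metric.closedBall (t : ℂ) (t / 2)) : ‖z‖ ^ 2 ≤ 2 * (z ^ 2).re := by
  have hdist : (z.re - t) ^ 2 + z.im ^ 2 ≤ (t / 2) ^ 2 := by
    have h := pow_le_pow_left₀ (norm_nonneg _) (mem_closedBall_iff_norm.1 hz) 2
    simpa only [Complex.sq_norm, Complex.normSq_apply, Complex.sub_re, Complex.sub_im,
      Complex.ofReal_re, Complex.ofReal_im, sub_zero, ← pow_two] using h
  rw [Complex.sq_norm, Complex.normSq_apply, pow_two z, Complex.mul_re]
  -- The disc is tangent to the lines `3 y² = x²` at the points with `x = 3 t / 4`.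
  nlinarith [sq_nonneg (z.re - 3 / 4 * t)]

lemma re_sq_pos_of_mem_closedBall {t : ℝ} (ht : 0 < t) {z : ℂ}
    (hz : z ∈ Metric.closedBall (t : ℂ) (t / 2)) : 0 < (z ^ 2).re := by
  have hz0 : z ≠ 0 := by
    rintro rfl
    rw [mem_closedBall_iff_norm, zero_sub, norm_neg, Complex.norm_of_nonneg ht.le] at hz
    linarith
  have := norm_sq_le_two_mul_re_sq_of_mem_closedBall hz
  have : 0 < ‖z‖ ^ 2 := by positivity
  linarith

lemma norm_poissonSubordination_le_of_mem_closedBall (hM : ∀ v ∈ Ioi (0 : ℝ), ‖g v‖ ≤ M)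
    {t : ℝ} (ht : 0 < t) {z : ℂ} (hz : z ∈ Metric.closedBall (t : ℂ) (t / 2)) :
    ‖poissonSubordination g z‖ ≤ √2 * M := by
  have hM0 : 0 ≤ M := (norm_nonneg _).trans (hM 1 (mem_Ioi.2 one_pos))
  have hpos := re_sq_pos_of_mem_closedBall ht hz
  have hratio : ‖z‖ / √(z ^ 2).re ≤ √2 := by
    rw [div_le_iff₀ (sqrt_pos.2 hpos), ← sqrt_mul zero_le_two]
    exact le_sqrt_of_sq_le (norm_sq_le_two_mul_re_sq_of_mem_closedBall hz)
  rw [mul_comm]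
  exact (norm_poissonSubordination_le hM hpos).trans (by gcongr)

theorem abs_iteratedDeriv_re_poissonSubordination_le {g : ℝ → ℂ}
    (hg : AEStronglyMeasurable g (volume.restrict (Ioi 0)))
    (hM : ∀ v ∈ Ioi (0 : ℝ), ‖g v‖ ≤ M) (n : ℕ) {t : ℝ} (ht : 0 < t) :
    |iteratedDeriv n (fun u : ℝ => (poissonSubordination g u).re) t| ≤
      √2 * n.factorial * 2 ^ n * M / t ^ n := by
  have hdiff : DifferentiableOn ℂ (poissonSubordination g) (Metric.closedBall t (t / 2)) :=
    fun z hz => (differentiableAt_poissonSubordination hg hM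
      (re_sq_pos_of_mem_closedBall ht hz)).differentiableWithinAt
  calc |iteratedDeriv n (fun u : ℝ => (poissonSubordination g u).re) t|
      ≤ n.factorial * (√2 * M) / (t / 2) ^ n :=
        abs_iteratedDeriv_re_le_of_forall_mem_sphere_norm_le n (half_pos ht)
          (hdiff.diffContOnCl_ball subset_rfl) fun z hz =>
            norm_poissonSubordination_le_of_mem_closedBall hM ht
              (Metric.sphere_subset_closedBall hz)
    _ = √2 * n.factorial * 2 ^ n * M / t ^ n := by
        rw [div_pow]
        field_simp

end Subordination

section ChangeOfVariables

lemma exp_neg_inv_mem_Ioo {v : ℝ} (hv : 0 < v) : exp (-v⁻¹) ∈ Ioo (0 : ℝ) 1 :=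
  ⟨exp_pos _, exp_lt_one_iff.2 (neg_lt_zero.2 (inv_pos.2 hv))⟩

lemma image_exp_neg_inv_Ioi : (fun v : ℝ => exp (-v⁻¹)) '' Ioi 0 = Ioo 0 1 := by
  refine Subset.antisymm (image_subset_iff.2 fun v hv => exp_neg_inv_mem_Ioo hv) fun r hr => ?_
  refine ⟨(-log r)⁻¹, inv_pos.2 (neg_pos.2 (log_neg hr.1 hr.2)), ?_⟩
  simp only [inv_inv, neg_neg, exp_log hr.1]

lemma integral_Ioo_zero_one_eq_integral_Ioi {E : Type*} [NormedAddCommGroup E] [NormedSpace ℝ E]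
    (G : ℝ → E) :
    ∫ r in Ioo (0 : ℝ) 1, G r = ∫ v in Ioi (0 : ℝ), (exp (-v⁻¹) / v ^ 2) • G (exp (-v⁻¹)) := by
  have hderiv (v : ℝ) (hv : v ∈ Ioi 0) :
      HasDerivWithinAt (fun v : ℝ => exp (-v⁻¹)) (exp (-v⁻¹) / v ^ 2) (Ioi 0) v := by
    simpa only [neg_neg, div_eq_mul_inv] using!
      (hasDerivAt_inv (ne_of_gt hv)).neg.exp.hasDerivWithinAt
  have hinj : InjOn (fun v : ℝ => exp (-v⁻¹)) (Ioi 0) :=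
    (exp_injective.comp (neg_injective.comp inv_injective)).injOn
  rw [← image_exp_neg_inv_Ioi,
    integral_image_eq_integral_abs_deriv_smul measurableSet_Ioi hderiv hinj]
  exact setIntegral_congr_fun measurableSet_Ioi fun v _ => by
    rw [abs_of_nonneg (by positivity)]

end ChangeOfVariables

section ProbabilityDensities

lemma integral_gammaPDFReal_Ioi {a r : ℝ} (ha : 0 < a) (hr : 0 < r) :
    ∫ y in Ioi 0, ProbabilityTheory.gammaPDFReal a r y = 1 := by
  have hcongr : EqOn (ProbabilityTheory.gammaPDFReal a r)
      (fun y => r ^ a / Gamma a * (y ^ (a - 1) * exp (-(r * y)))) (Ioi 0) := fun y hy => by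
    rw [ProbabilityTheory.gammaPDFReal, if_pos (le_of_lt hy), mul_assoc]
  rw [setIntegral_congr_fun measurableSet_Ioi hcongr, integral_const_mul,
    integral_rpow_mul_exp_neg_mul_Ioi ha hr, one_div, inv_rpow hr.le]
  have := Gamma_pos_of_pos ha
  field_simp

variable {X Y : Type*} [MeasurableSpace X] [MeasurableSpace Y] {μ : Measure X} {ν : Measure Y}

lemma integral_tsum_mul_eq_one {w : ℕ → ℝ} {p : ℕ → X → ℝ} (hw0 : ∀ m, 0 ≤ w m)
    (hw : HasSum w 1) (hp0 : ∀ m, 0 ≤ p m) (hp : ∀ m, ∫ y, p m y ∂μ = 1) :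
    ∫ y, ∑' m, w m * p m y ∂μ = 1 := by
  have hint (m : ℕ) : Integrable (p m) μ := .of_integral_ne_zero (by rw [hp]; exact one_ne_zero)
  have hval (m : ℕ) : ∫ y, w m * p m y ∂μ = w m := by rw [integral_const_mul, hp, mul_one]
  have hnorm (m : ℕ) : ∫ y, ‖w m * p m y‖ ∂μ = w m := by
    simpa only [norm_of_nonneg (mul_nonneg (hw0 m) (hp0 m _))] using hval m
  have hsum := hasSum_integral_of_summable_integral_norm (fun m => (hint m).const_mul (w m))
    (by simpa only [hnorm] using hw.summable)
  simp only [hval] at hsum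
  exact hsum.unique hw

lemma abs_integral_mul_le_of_integral_eq_one {k f : X → ℝ} {M : ℝ} (hk0 : ∀ᵐ y ∂μ, 0 ≤ k y)
    (hk : ∫ y, k y ∂μ = 1) (hf : ∀ᵐ y ∂μ, |f y| ≤ M) : |∫ y, k y * f y ∂μ| ≤ M := by
  have hint : Integrable k μ := .of_integral_ne_zero (by rw [hk]; exact one_ne_zero)
  have hle : ∀ᵐ y ∂μ, ‖k y * f y‖ ≤ k y * M := by
    filter_upwards [hk0, hf] with y hy hfy
    rw [norm_mul, norm_of_nonneg hy]
    exact mul_le_mul_of_nonneg_left hfy hy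
  simpa only [integral_mul_const, hk, one_mul, norm_eq_abs] using
    norm_integral_le_of_norm_le (hint.mul_const M) hle

lemma integrable_prod_mul_of_integral_eq_one [SFinite ν] {w : X → ℝ} {k : X → Y → ℝ}
    (hw : Integrable w μ)
    (hk : AEStronglyMeasurable (fun p : X × Y => k p.1 p.2) (μ.prod ν))
    (hk0 : ∀ᵐ v ∂μ, ∀ᵐ y ∂ν, 0 ≤ k v y) (hk1 : ∀ᵐ v ∂μ, ∫ y, k v y ∂ν = 1) :
    Integrable (fun p : X × Y => w p.1 * k p.1 p.2) (μ.prod ν) := by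
  refine (integrable_prod_iff (hw.aestronglyMeasurable.comp_fst.mul hk)).2 ⟨?_, ?_⟩
  · filter_upwards [hk1] with v hv
    exact (Integrable.of_integral_ne_zero (by rw [hv]; exact one_ne_zero)).const_mul (w v)
  · refine hw.norm.congr ?_
    filter_upwards [hk0, hk1] with v hv0 hv1
    have hnorm : (fun y => ‖w v * k v y‖) =ᵐ[ν] fun y => ‖w v‖ * k v y := by
      filter_upwards [hv0] with y hy
      rw [norm_mul, norm_of_nonneg hy]
    exact ((integral_congr_ae hnorm).trans (by rw [integral_const_mul, hv1, mul_one])).symm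

end ProbabilityDensities

section HeatKernel

variable {a r x : ℝ}

lemma besselI_nonneg (ha : -1 < a) {z : ℝ} (hz : 0 ≤ z) : 0 ≤ besselI a z :=
  tsum_nonneg fun m => by
    have := Gamma_pos_of_pos (by linarith [m.cast_nonneg (α := ℝ)] : (0 : ℝ) < m + a + 1)
    positivity

@[fun_prop]
lemma measurable_besselI (a : ℝ) : Measurable (besselI a) := by
  unfold besselI
  fun_prop

/-- The one-dimensional Laguerre heat kernel from `x` to `y` at time `-log r`. -/
noncomputable def laguerreHeatKernel (a r x y : ℝ) : ℝ :=
  (y / x) ^ (a / 2) * exp (-((r * x + y) / (1 - r)) - a * log r / 2) *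
    besselI a (2 * √(r * x * y) / (1 - r)) / (1 - r)

lemma measurable_laguerreHeatKernel (a x : ℝ) :
    Measurable fun p : ℝ × ℝ => laguerreHeatKernel a p.1 x p.2 := by
  unfold laguerreHeatKernel
  fun_prop

lemma laguerreHeatKernel_nonneg (ha : -1 < a) (hr : r ∈ Ioo (0 : ℝ) 1) (hx : 0 < x) {y : ℝ}
    (hy : 0 < y) : 0 ≤ laguerreHeatKernel a r x y := by
  have hq : 0 < 1 - r := sub_pos.2 hr.2
  have := besselI_nonneg ha (z := 2 * √(r * x * y) / (1 - r)) (by positivity)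
  unfold laguerreHeatKernel
  positivity

lemma rpow_mul_exp_mul_sqrt_rpow_eq {q y : ℝ} (a : ℝ) (hr : 0 < r) (hx : 0 < x) (hq : 0 < q)
    (hy : 0 < y) (m : ℕ) :
    (y / x) ^ (a / 2) * exp (-(a * log r / 2)) *
        (2 * √(r * x * y) / q / 2) ^ (2 * (m : ℝ) + a) / q =
      (r * x / q) ^ m * q⁻¹ ^ (m + a + 1) * y ^ (m + a + 1 - 1) := by
  obtain ⟨R, rfl⟩ : ∃ R, r = exp R := ⟨_, (exp_log hr).symm⟩
  obtain ⟨X, rfl⟩ : ∃ X, x = exp X := ⟨_, (exp_log hx).symm⟩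
  obtain ⟨Q, rfl⟩ : ∃ Q, q = exp Q := ⟨_, (exp_log hq).symm⟩
  obtain ⟨Y, rfl⟩ : ∃ Y, y = exp Y := ⟨_, (exp_log hy).symm⟩
  rw [div_right_comm _ _ (2 : ℝ), mul_div_cancel_left₀ _ two_ne_zero, ← rpow_natCast]
  simp only [← exp_add, ← exp_sub, ← exp_half, ← exp_mul, ← exp_neg, log_exp]
  congr 1
  ring

lemma laguerreHeatKernel_eq_tsum_gammaPDFReal (hr : r ∈ Ioo (0 : ℝ) 1) (hx : 0 < x) {y : ℝ}
    (hy : 0 < y) :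
    laguerreHeatKernel a r x y = ∑' m : ℕ,
      exp (-(r * x / (1 - r))) * (r * x / (1 - r)) ^ m / m.factorial *
        ProbabilityTheory.gammaPDFReal (m + a + 1) (1 - r)⁻¹ y := by
  rw [laguerreHeatKernel, besselI, ← tsum_mul_left, ← tsum_div_const]
  refine tsum_congr fun m => ?_
  have hpow := rpow_mul_exp_mul_sqrt_rpow_eq a hr.1 hx (sub_pos.2 hr.2) hy m
  have hexp : exp (-((r * x + y) / (1 - r)) - a * log r / 2) =
      exp (-(r * x / (1 - r))) * exp (-((1 - r)⁻¹ * y)) * exp (-(a * log r / 2)) := by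
    rw [← exp_add, ← exp_add]
    ring_nf
  rw [hexp, ProbabilityTheory.gammaPDFReal, if_pos hy.le]
  linear_combination (exp (-(r * x / (1 - r))) * exp (-((1 - r)⁻¹ * y)) *
    ((m.factorial : ℝ) * Gamma (m + a + 1))⁻¹) * hpow

theorem integral_laguerreHeatKernel (ha : -1 < a) (hr : r ∈ Ioo (0 : ℝ) 1) (hx : 0 < x) :
    ∫ y in Ioi 0, laguerreHeatKernel a r x y = 1 := by
  have hr0 := hr.1
  have hq : 0 < (1 - r)⁻¹ := inv_pos.2 (sub_pos.2 hr.2)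
  have hb : 0 ≤ r * x / (1 - r) := by rw [div_eq_mul_inv]; positivity
  have hm (m : ℕ) : (0 : ℝ) < m + a + 1 := by linarith [m.cast_nonneg (α := ℝ)]
  rw [setIntegral_congr_fun measurableSet_Ioi fun y hy =>
    laguerreHeatKernel_eq_tsum_gammaPDFReal hr hx hy]
  exact integral_tsum_mul_eq_one (fun m => by positivity)
    (ProbabilityTheory.hasSum_one_poissonMeasure ⟨_, hb⟩)
    (fun m y => ProbabilityTheory.gammaPDFReal_nonneg (hm m) hq y)
    (fun m => integral_gammaPDFReal_Ioi (hm m) hq)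

end HeatKernel

section HeatSemigroup

variable {d : ℕ} {α x : Fin d → ℝ} {r M : ℝ} {f : (Fin d → ℝ) → ℝ}

lemma measurableSet_posOrthant (d : ℕ) : MeasurableSet (posOrthant d) :=
  MeasurableSet.univ_pi fun _ => measurableSet_Ioi

/-- The `d`-dimensional Laguerre heat kernel from `x` to `y` at time `-log r`. -/
noncomputable def laguerreHeatKernelPi (α : Fin d → ℝ) (r : ℝ) (x y : Fin d → ℝ) : ℝ :=
  ∏ j, laguerreHeatKernel (α j) r (x j) (y j)

lemma measurable_laguerreHeatKernelPi (α x : Fin d → ℝ) :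
    Measurable fun p : ℝ × (Fin d → ℝ) => laguerreHeatKernelPi α p.1 x p.2 :=
  Finset.measurable_fun_prod _ fun j _ =>
    (measurable_laguerreHeatKernel (α j) (x j)).comp
      (f := fun p : ℝ × (Fin d → ℝ) => (p.1, p.2 j)) (by fun_prop)

lemma measurable_laguerreHeatKernelPi_exp_neg_inv (α x : Fin d → ℝ) :
    Measurable fun p : ℝ × (Fin d → ℝ) => laguerreHeatKernelPi α (exp (-p.1⁻¹)) x p.2 :=
  (measurable_laguerreHeatKernelPi α x).comp
    (f := fun p : ℝ × (Fin d → ℝ) => (exp (-p.1⁻¹), p.2)) (by fun_prop)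

lemma ae_laguerreHeatKernelPi_nonneg (hα : ∀ j, -1 < α j) (hr : r ∈ Ioo (0 : ℝ) 1)
    (hx : x ∈ posOrthant d) :
    ∀ᵐ y ∂volume.restrict (posOrthant d), 0 ≤ laguerreHeatKernelPi α r x y :=
  ae_restrict_of_forall_mem (measurableSet_posOrthant d) fun _ hy =>
    Finset.prod_nonneg fun j _ =>
      laguerreHeatKernel_nonneg (hα j) hr (hx j trivial) (hy j trivial)

lemma integral_laguerreHeatKernelPi (hα : ∀ j, -1 < α j) (hr : r ∈ Ioo (0 : ℝ) 1)
    (hx : x ∈ posOrthant d) :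
    ∫ y in posOrthant d, laguerreHeatKernelPi α r x y = 1 := by
  have hpi : (volume : Measure (Fin d → ℝ)).restrict (posOrthant d) =
      Measure.pi fun _ => volume.restrict (Ioi 0) := Measure.restrict_pi_pi _ _
  simp only [hpi, laguerreHeatKernelPi]
  rw [integral_fintype_prod_eq_prod]
  exact Finset.prod_eq_one fun j _ => integral_laguerreHeatKernel (hα j) hr (hx j trivial)

/-- The Laguerre heat semigroup applied to `f`, at the point `x` and the time `-log r`. -/
noncomputable def laguerreHeat (α : Fin d → ℝ) (r : ℝ) (f : (Fin d → ℝ) → ℝ)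
    (x : Fin d → ℝ) : ℝ :=
  ∫ y in posOrthant d, laguerreHeatKernelPi α r x y * f y

lemma abs_laguerreHeat_le (hα : ∀ j, -1 < α j) (hr : r ∈ Ioo (0 : ℝ) 1)
    (hx : x ∈ posOrthant d) (hM : ∀ᵐ y ∂volume.restrict (posOrthant d), |f y| ≤ M) :
    |laguerreHeat α r f x| ≤ M :=
  abs_integral_mul_le_of_integral_eq_one (ae_laguerreHeatKernelPi_nonneg hα hr hx)
    (integral_laguerreHeatKernelPi hα hr hx) hM

lemma aestronglyMeasurable_laguerreHeat (α x : Fin d → ℝ) (μ : Measure ℝ) [SFinite μ]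
    (hf : AEStronglyMeasurable f (volume.restrict (posOrthant d))) :
    AEStronglyMeasurable (fun v => laguerreHeat α (exp (-v⁻¹)) f x) μ :=
  ((measurable_laguerreHeatKernelPi_exp_neg_inv α x).aestronglyMeasurable.mul
    hf.comp_snd).integral_prod_right'

end HeatSemigroup

section PoissonSemigroup

variable {d : ℕ} {α x : Fin d → ℝ} {M : ℝ} {f : (Fin d → ℝ) → ℝ}

lemma plKernel_eq_integral_Ioi (α : Fin d → ℝ) (t : ℝ) (x y : Fin d → ℝ) :
    plKernel d α t x y = t / (2 * √π) * ∫ v in Ioi (0 : ℝ),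
      exp (-(t ^ 2 / 4 * v)) * v ^ ((1 / 2 : ℝ) - 1) *
        laguerreHeatKernelPi α (exp (-v⁻¹)) x y := by
  rw [plKernel, integral_Ioo_zero_one_eq_integral_Ioi, ← integral_const_mul, ← integral_const_mul]
  refine setIntegral_congr_fun measurableSet_Ioi fun v (hv : 0 < v) => ?_
  have hpow : v⁻¹ ^ (3 / 2 : ℝ) = (v ^ 2)⁻¹ * (v ^ ((1 / 2 : ℝ) - 1))⁻¹ := by
    rw [inv_rpow hv.le, ← mul_inv, ← rpow_natCast, ← rpow_add hv]
    norm_num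
  have hlog : t ^ 2 / (4 * -v⁻¹) = -(t ^ 2 / 4 * v) := by field_simp
  have : 0 < v ^ ((1 / 2 : ℝ) - 1) := rpow_pos_of_pos hv _
  simp only [laguerreHeatKernelPi, laguerreHeatKernel, Finset.prod_div_distrib, Finset.prod_const,
    Finset.card_univ, Fintype.card_fin, log_exp, neg_neg, smul_eq_mul, hpow, hlog]
  field_simp

lemma integrable_exp_neg_mul_rpow_mul_laguerreHeatKernelPi_mul (hα : ∀ j, -1 < α j)
    (hx : x ∈ posOrthant d) (hf : AEStronglyMeasurable f (volume.restrict (posOrthant d)))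
    (hM : ∀ᵐ y ∂volume.restrict (posOrthant d), |f y| ≤ M) {a c : ℝ} (ha : 0 < a) (hc : 0 < c) :
    Integrable (fun p : ℝ × (Fin d → ℝ) => exp (-(c * p.1)) * p.1 ^ (a - 1) *
        laguerreHeatKernelPi α (exp (-p.1⁻¹)) x p.2 * f p.2)
      ((volume.restrict (Ioi 0)).prod (volume.restrict (posOrthant d))) := by
  have hdensity := integrable_prod_mul_of_integral_eq_one (integrableOn_exp_neg_mul_rpow ha hc)
    (measurable_laguerreHeatKernelPi_exp_neg_inv α x).aestronglyMeasurable
    (ae_restrict_of_forall_mem measurableSet_Ioi fun v hv =>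
      ae_laguerreHeatKernelPi_nonneg hα (exp_neg_inv_mem_Ioo hv) hx)
    (ae_restrict_of_forall_mem measurableSet_Ioi fun v hv =>
      integral_laguerreHeatKernelPi hα (exp_neg_inv_mem_Ioo hv) hx)
  exact hdensity.mul_bdd (c := M) hf.comp_snd (Measure.quasiMeasurePreserving_snd.ae hM)

theorem plP_eq_re_poissonSubordination (hα : ∀ j, -1 < α j) (hx : x ∈ posOrthant d)
    (hf : AEStronglyMeasurable f (volume.restrict (posOrthant d)))
    (hM : ∀ᵐ y ∂volume.restrict (posOrthant d), |f y| ≤ M) {t : ℝ} (ht : 0 < t) :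
    plP d α t f x =
      (poissonSubordination (fun v => (laguerreHeat α (exp (-v⁻¹)) f x : ℂ)) t).re := by
  have hint := integrable_exp_neg_mul_rpow_mul_laguerreHeatKernelPi_mul hα hx hf hM one_half_pos
    (by positivity : 0 < t ^ 2 / 4)
  have hswap : ∫ y in posOrthant d, ∫ v in Ioi (0 : ℝ), exp (-(t ^ 2 / 4 * v)) *
        v ^ ((1 / 2 : ℝ) - 1) * laguerreHeatKernelPi α (exp (-v⁻¹)) x y * f y =
      ∫ v in Ioi (0 : ℝ), ∫ y in posOrthant d, exp (-(t ^ 2 / 4 * v)) *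
        v ^ ((1 / 2 : ℝ) - 1) * laguerreHeatKernelPi α (exp (-v⁻¹)) x y * f y :=
    (integral_integral_swap hint).symm
  rw [poissonSubordination_ofReal, Complex.ofReal_re, plP, if_neg ht.ne']
  simp only [plKernel_eq_integral_Ioi, mul_assoc (t / _), ← integral_mul_const]
  rw [integral_const_mul, hswap]
  simp only [laguerreHeat, mul_assoc, integral_const_mul]

theorem laguerre_poisson_semigroup_iteratedDeriv_sup_bound_general (hα : ∀ j, -1 < α j) (n : ℕ)
    (hf : AEStronglyMeasurable f (volume.restrict (posOrthant d)))
    (hM : ∀ᵐ y ∂volume.restrict (posOrthant d), |f y| ≤ M) {t : ℝ} (ht : 0 < t)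
    (hx : x ∈ posOrthant d) :
    |iteratedDeriv n (fun u => plP d α u f x) t| ≤ √2 * n.factorial * 2 ^ n * M / t ^ n := by
  set g : ℝ → ℂ := fun v => (laguerreHeat α (exp (-v⁻¹)) f x : ℂ)
  have hg : AEStronglyMeasurable g (volume.restrict (Ioi 0)) :=
    Complex.continuous_ofReal.comp_aestronglyMeasurable (aestronglyMeasurable_laguerreHeat α x _ hf)
  have hgM : ∀ v ∈ Ioi (0 : ℝ), ‖g v‖ ≤ M := fun v hv =>
    (Complex.norm_real _).trans_le (abs_laguerreHeat_le hα (exp_neg_inv_mem_Ioo hv) hx hM)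
  have heq : (fun u => plP d α u f x) =ᶠ[nhds t] fun u : ℝ => (poissonSubordination g u).re :=
    (lt_mem_nhds ht).mono fun u hu => plP_eq_re_poissonSubordination hα hx hf hM hu
  rw [heq.iteratedDeriv_eq n]
  exact abs_iteratedDeriv_re_poissonSubordination_le hg hgM n ht

end PoissonSemigroup

theorem laguerre_poisson_semigroup_iteratedDeriv_sup_bound
    (d : ℕ) (hd : 1 ≤ d) (α : Fin d → ℝ) (hα : ∀ j, -(1 / 2 : ℝ) < α j)
    (n : ℕ) (hn : 0 < n) :
    ∃ C > 0, ∀ (f : (Fin d → ℝ) → ℝ) (M : ℝ), Measurable f → (∀ y, |f y| ≤ M) →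
      ∀ t > (0 : ℝ), ∀ x ∈ posOrthant d,
        |iteratedDeriv n (fun u => plP d α u f x) t| ≤ C * M / t ^ n :=
  ⟨√2 * n.factorial * 2 ^ n, by positivity, fun _ _ hf hM _ ht _ hx =>
    laguerre_poisson_semigroup_iteratedDeriv_sup_bound_general (fun j => by linarith [hα j]) n
      hf.aestronglyMeasurable (ae_of_all _ hM) ht hx⟩
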